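/- Let S = k[X_0,...,X_n] be a polynomial ring and let N, M be nonzero finitely generated graded S-modules of finite length. Then Tor_i^S(N, M) ≠ 0 for all 0 ≤ i ≤ n+1. -/

import Mathlib

/-!
Background setup (the paper works on projective space `ℙⁿ` over a field `K`):
we encode a coherent sheaf on `ℙⁿ_K` by a module `M` over the homogeneous coordinate
ring `S = K[X₀,…,Xₙ]` (namely `M = Γ_*` of the sheaf), and the intermediate cohomology
module `H^i_*(F) = ⊕_ν H^i(ℙⁿ, F(ν))` (for `i ≥ 1`) by the local cohomology module
`H^{i+1}_𝔪(M)` at the irrelevant maximal ideal `𝔪 = (X₀,…,Xₙ)`, to which it is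
canonically isomorphic.
-/

open CategoryTheory TensorProduct

noncomputable section

/-- The homogeneous coordinate ring `S = K[X₀,…,Xₙ]` of `ℙⁿ`. -/
abbrev PolyS (K : Type) [Field K] (n : ℕ) : Type := MvPolynomial (Fin (n+1)) K

variable (K : Type) [Field K] (n : ℕ)

/-- The irrelevant maximal ideal `𝔪 = (X₀,…,Xₙ)` of `S`. -/
def irrel : Ideal (PolyS K n) := Ideal.span (Set.range MvPolynomial.X)

/-- `H^i_*` of the sheaf on `ℙⁿ` associated to the `S`-module `M`, encoded (for `i ≥ 1`)
as the local cohomology module `H^{i+1}_𝔪(M)`. -/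
def Hstar (i : ℕ) (M : Type) [AddCommGroup M] [Module (PolyS K n) M] :
    ModuleCat (PolyS K n) :=
  (localCohomology (irrel K n) (i+1)).obj (ModuleCat.of (PolyS K n) M)

/-- `M` is (the module of sections `Γ_*` of) an algebraic vector bundle on `ℙⁿ`:
finitely generated, depth `≥ 2` at `𝔪` (i.e. `H⁰_𝔪(M) = H¹_𝔪(M) = 0`, so `M = Γ_*(M̃)`),
and locally free at every prime other than the irrelevant ideal. -/
structure IsBundleModule (M : Type) [AddCommGroup M] [Module (PolyS K n) M] : Prop where
  finite : Module.Finite (PolyS K n) M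
  h0 : Subsingleton ((localCohomology (irrel K n) 0).obj (ModuleCat.of (PolyS K n) M))
  h1 : Subsingleton ((localCohomology (irrel K n) 1).obj (ModuleCat.of (PolyS K n) M))
  locFree : ∀ p : PrimeSpectrum (PolyS K n), p.asIdeal ≠ irrel K n →
    Module.Free (Localization.AtPrime p.asIdeal) (LocalizedModule p.asIdeal.primeCompl M)

/-- `M` represents a vector bundle of rank two on `ℙⁿ`. -/
structure IsRankTwoBundleModule (M : Type) [AddCommGroup M] [Module (PolyS K n) M]
    extends IsBundleModule K n M : Prop where
  rank2 : ∀ p : PrimeSpectrum (PolyS K n), p.asIdeal ≠ irrel K n →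
    Module.rank (Localization.AtPrime p.asIdeal) (LocalizedModule p.asIdeal.primeCompl M) = 2

/-- A finite length module which is moreover supported at the irrelevant ideal: the
(ungraded avatar of the) notion of a *graded* `S`-module of finite length. -/
def IsGradedFiniteLength (N : Type) [AddCommGroup N] [Module (PolyS K n) N] : Prop :=
  IsFiniteLength (PolyS K n) N ∧
    ∃ c : ℕ, (irrel K n) ^ c ≤ Module.annihilator (PolyS K n) N

namespace TorNV
open MonoidalCategory

variable {S : Type} [CommRing S]

/-- The complex `N ⊗ P` as a functor of `N`. -/
def cplx (P : ChainComplex (ModuleCat.{0} S) ℕ) :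
    ModuleCat.{0} S ⥤ ChainComplex (ModuleCat.{0} S) ℕ where
  obj N := (((tensoringLeft (ModuleCat.{0} S)).obj N).mapHomologicalComplex _).obj P
  map f := (NatTrans.mapHomologicalComplex ((tensoringLeft (ModuleCat.{0} S)).map f) _).app P
  map_id N := by
    ext i : 1
    simp
  map_comp f g := by
    ext i : 1
    simp

/-- Its homology. -/
def G (P : ChainComplex (ModuleCat.{0} S) ℕ) (i : ℕ) : ModuleCat.{0} S ⥤ ModuleCat.{0} S :=
  cplx P ⋙ HomologicalComplex.homologyFunctor _ _ i

lemma cplx_map_f (P : ChainComplex (ModuleCat.{0} S) ℕ) {A B : ModuleCat.{0} S}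
    (f : A ⟶ B) (i : ℕ) : ((cplx P).map f).f i = f ▷ P.X i := rfl

lemma homologyMap_smul' {X Y : ChainComplex (ModuleCat.{0} S) ℕ} (φ : X ⟶ Y) (r : S) (i : ℕ) :
    HomologicalComplex.homologyMap (r • φ) i = r • HomologicalComplex.homologyMap φ i := by
  have h := ShortComplex.homologyMap_smul
    ((HomologicalComplex.shortComplexFunctor (ModuleCat S) (ComplexShape.down ℕ) i).map φ) r
  exact h

lemma whisker_sub {A B : ModuleCat.{0} S} (f g : A ⟶ B) (X : ModuleCat.{0} S) :
    (f - g) ▷ X = f ▷ X - g ▷ X := (tensorRight X).map_sub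

lemma whisker_smul {A B : ModuleCat.{0} S} (r : S) (f : A ⟶ B) (X : ModuleCat.{0} S) :
    (r • f) ▷ X = r • (f ▷ X) := MonoidalLinear.smul_whiskerRight _ _ _

lemma G_map_sub (P : ChainComplex (ModuleCat.{0} S) ℕ) (i : ℕ) {A B : ModuleCat.{0} S}
    (f g : A ⟶ B) : (G P i).map (f - g) = (G P i).map f - (G P i).map g := by
  have : (cplx P).map (f - g) = (cplx P).map f - (cplx P).map g := by
    ext i : 1
    exact whisker_sub f g (P.X i)
  change HomologicalComplex.homologyMap ((cplx P).map (f - g)) i = _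
  rw [this, HomologicalComplex.homologyMap_sub]
  rfl

lemma G_map_smul (P : ChainComplex (ModuleCat.{0} S) ℕ) (i : ℕ) {A B : ModuleCat.{0} S}
    (r : S) (f : A ⟶ B) : (G P i).map (r • f) = r • (G P i).map f := by
  have : (cplx P).map (r • f) = r • (cplx P).map f := by
    ext i : 1
    exact whisker_smul r f (P.X i)
  change HomologicalComplex.homologyMap ((cplx P).map (r • f)) i = _
  rw [this, homologyMap_smul']
  rfl

lemma G_smul_zero {M : ModuleCat.{0} S} (P : ProjectiveResolution M) (i : ℕ) (r : S)
    (hr : ∀ m : M, r • m = 0) (N : ModuleCat.{0} S) (z : (G P.complex i).obj N) : r • z = 0 := by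
  have hM : r • 𝟙 M = 0 := by
    ext z
    exact hr z
  have hh : Homotopy (r • 𝟙 P.complex) 0 := by
    apply ProjectiveResolution.liftHomotopyZero (P := P) (Q := P)
    have : r • P.π = 0 := by
      have h1 : P.π ≫ (ChainComplex.single₀ _).map (r • 𝟙 M) = r • P.π := by
        apply HomologicalComplex.to_single_hom_ext
        change P.π.f 0 ≫ ((ChainComplex.single₀ _).map (r • 𝟙 M)).f 0  = (r • P.π.f 0)
        rw [ChainComplex.single₀_map_f_zero]
        exact (Linear.comp_smul (X := P.complex.X 0) (Y := M) (Z := M) (P.π.f 0) r (𝟙 M)).trans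
          (congrArg (r • ·) (Category.comp_id (X := P.complex.X 0) (Y := M) (P.π.f 0)))
      rw [← h1, hM, Functor.map_zero, Limits.comp_zero]
    rw [Linear.smul_comp, Category.id_comp, this]
  have h2 := ((tensoringLeft (ModuleCat.{0} S)).obj N).mapHomotopy hh
  have h3 := h2.homologyMap_eq i
  have h4 : (((tensoringLeft (ModuleCat.{0} S)).obj N).mapHomologicalComplex _).map
      (r • 𝟙 P.complex) = (cplx P.complex).map (r • 𝟙 N) := by
    ext i : 1
    change N ◁ (r • 𝟙 (P.complex.X i)) = (r • 𝟙 N) ▷ P.complex.X i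
    simp [MonoidalLinear.smul_whiskerRight, MonoidalLinear.whiskerLeft_smul]
  have h5 : (G P.complex i).map (r • 𝟙 N) = 0 := by
    change HomologicalComplex.homologyMap ((cplx P.complex).map (r • 𝟙 N)) i = 0
    rw [← h4]
    refine h3.trans ?_
    rw [Functor.map_zero]
    exact HomologicalComplex.homologyMap_zero _ _ _
  rw [G_map_smul, CategoryTheory.Functor.map_id] at h5
  exact congr($(congrArg ModuleCat.Hom.hom h5) z)

lemma G_pow (P : ChainComplex (ModuleCat.{0} S) ℕ) (i : ℕ) {A : ModuleCat.{0} S}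
    (α : A →ₗ[S] A) (c : ℕ) : ((G P i).map (ModuleCat.ofHom α)).hom ^ c =
      ((G P i).map (ModuleCat.ofHom (α ^ c))).hom := by
  induction c with
  | zero =>
    rw [pow_zero, pow_zero]
    have : ModuleCat.ofHom (1 : A →ₗ[S] A) = 𝟙 A := rfl
    rw [this, CategoryTheory.Functor.map_id]; rfl
  | succ c ih =>
    rw [pow_succ, pow_succ, ih]
    have : ModuleCat.ofHom (α ^ c * α) = ModuleCat.ofHom α ≫ ModuleCat.ofHom (α ^ c) := rfl
    rw [this, Functor.map_comp]; rfl

lemma G_nilp {M : ModuleCat.{0} S} (P : ProjectiveResolution M) (i : ℕ) (r : S) (c : ℕ)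
    (hr : ∀ m : M, r ^ c • m = 0) (Q : ModuleCat.{0} S) (α : Q →ₗ[S] Q) (e : ℕ) (hα : α ^ e = 0) :
    IsNilpotent ((G P.complex i).map (ModuleCat.ofHom (r • LinearMap.id - α))).hom := by
  have h1 : ModuleCat.ofHom (r • LinearMap.id - α) = r • 𝟙 Q - ModuleCat.ofHom α := rfl
  rw [h1, G_map_sub, G_map_smul, CategoryTheory.Functor.map_id, ModuleCat.hom_sub]
  apply Commute.isNilpotent_sub
  · have : (r • 𝟙 ((G P.complex i).obj Q)).hom = r • (1 : Module.End S _) := rfl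
    rw [this]
    exact (Commute.one_left _).smul_left r
  · refine ⟨c, ?_⟩
    have : (r • 𝟙 ((G P.complex i).obj Q)).hom = r • (1 : Module.End S _) := rfl
    rw [this, smul_pow, one_pow]
    ext z
    exact G_smul_zero P i _ hr Q z
  · refine ⟨e, ?_⟩
    rw [G_pow, hα]
    have : ModuleCat.ofHom (0 : Q →ₗ[S] Q) = (0 : S) • 𝟙 Q := by simp
    rw [this, G_map_smul, zero_smul]; rfl

lemma not_nilp_inj {V : Type*} [AddCommGroup V] [Module S V] [Nontrivial V] (D : Module.End S V)
    (h : IsNilpotent D) : ¬ Function.Injective D := by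
  intro hi
  obtain ⟨c, hc⟩ := h
  obtain ⟨v, hv⟩ := exists_ne (0 : V)
  have := (hi.iterate c)
  rw [← Module.End.coe_pow, hc] at this
  exact hv (this (by simp))

lemma not_nilp_surj {V : Type*} [AddCommGroup V] [Module S V] [Nontrivial V] (D : Module.End S V)
    (h : IsNilpotent D) : ¬ Function.Surjective D := by
  intro hi
  obtain ⟨c, hc⟩ := h
  obtain ⟨v, hv⟩ := exists_ne (0 : V)
  have := (hi.iterate c)
  rw [← Module.End.coe_pow, hc] at this
  obtain ⟨w, hw⟩ := this v
  exact hv (by simpa using hw.symm)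

lemma cplx_shortExact {M : ModuleCat.{0} S} (P : ProjectiveResolution M)
    (T : ShortComplex (ModuleCat.{0} S)) (hT : T.ShortExact) :
    ∃ w, (ShortComplex.mk ((cplx P.complex).map T.f) ((cplx P.complex).map T.g) w).ShortExact := by
  have w : (cplx P.complex).map T.f ≫ (cplx P.complex).map T.g = 0 := by
    rw [← Functor.map_comp, T.zero]
    ext i : 1
    exact (tensorRight (P.complex.X i)).map_zero _ _
  refine ⟨w, HomologicalComplex.shortExact_of_degreewise_shortExact _ fun i => ?_⟩
  have : Module.Projective S (P.complex.X i) :=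
    (IsProjective.iff_projective _ ).2 (P.projective i)
  have := hT.map_of_exact (tensorRight (P.complex.X i))
  exact this

lemma step {M : ModuleCat.{0} S} (P : ProjectiveResolution M) (r : S) (c : ℕ)
    (hr : ∀ m : M, r ^ c • m = 0) (Q N : ModuleCat.{0} S) (α : Q →ₗ[S] Q) (e : ℕ) (hα : α ^ e = 0)
    (g : Q →ₗ[S] N) (hg : Function.Surjective g)
    (hi : Function.Injective (r • LinearMap.id - α : Q →ₗ[S] Q))
    (hex : Function.Exact (r • LinearMap.id - α : Q →ₗ[S] Q) g) (i : ℕ)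
    (hQ : Nontrivial ((G P.complex i).obj Q)) :
    Nontrivial ((G P.complex i).obj N) ∧ Nontrivial ((G P.complex (i+1)).obj N) := by
  let T : ShortComplex (ModuleCat.{0} S) := ShortComplex.mk (ModuleCat.ofHom (r • LinearMap.id - α))
    (ModuleCat.ofHom g) (by ext x; exact hex.apply_apply_eq_zero x)
  have hT : T.ShortExact := by
    have : Mono T.f := (ModuleCat.mono_iff_injective _).2 hi
    have : Epi T.g := (ModuleCat.epi_iff_surjective _).2 hg
    exact ⟨(ShortComplex.ShortExact.moduleCat_exact_iff_function_exact _).2 hex⟩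
  obtain ⟨w, hS⟩ := cplx_shortExact P T hT
  have hn := G_nilp P i r c hr Q α e hα
  constructor
  · by_contra h
    rw [not_nontrivial_iff_subsingleton] at h
    have h2 := hS.homology_exact₂ i
    rw [ShortComplex.moduleCat_exact_iff] at h2
    apply not_nilp_surj _ hn
    intro y
    exact h2 y (@Subsingleton.elim _ h _ _)
  · by_contra h
    rw [not_nontrivial_iff_subsingleton] at h
    have h2 := hS.homology_exact₁ (i+1) i (by simp)
    rw [ShortComplex.moduleCat_exact_iff] at h2
    apply not_nilp_inj _ hn
    rw [injective_iff_map_eq_zero]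
    intro y hy
    obtain ⟨x, rfl⟩ := h2 y hy
    have : x = 0 := (@Subsingleton.elim _ h _ _)
    rw [this]
    exact map_zero _


lemma tor_nontrivial_iff (M N : ModuleCat.{0} S) (P : ProjectiveResolution M) (i : ℕ) :
    Nontrivial (((Tor (ModuleCat.{0} S) i).obj N).obj M) ↔
      Nontrivial ((G P.complex i).obj N) := by
  have e : ((Tor (ModuleCat.{0} S) i).obj N).obj M ≅ (G P.complex i).obj N :=
    P.isoLeftDerivedObj ((tensoringLeft (ModuleCat.{0} S)).obj N) i
  exact e.toLinearEquiv.toEquiv.nontrivial_congr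

lemma G_zero (M N : ModuleCat.{0} S) (P : ProjectiveResolution M)
    (h : Nontrivial (N ⊗[S] M)) : Nontrivial ((G P.complex 0).obj N) := by
  rw [← tor_nontrivial_iff]
  have e := (((tensoringLeft (ModuleCat.{0} S)).obj N).leftDerivedZeroIsoSelf).app M
  exact e.toLinearEquiv.toEquiv.nontrivial_congr.2 h

section poly

variable (K : Type) [Field K] (σ : Type) [DecidableEq σ]

/-- The endomorphism `X_j ↦ t`, other variables fixed. -/
def phi (j : σ) : MvPolynomial σ K →+* Polynomial (MvPolynomial σ K) :=
  (MvPolynomial.aeval (R := K)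
    (fun i => if i = j then Polynomial.X else Polynomial.C (MvPolynomial.X i))).toRingHom

lemma phi_X (j i : σ) : phi K σ j (MvPolynomial.X i) =
    if i = j then Polynomial.X else Polynomial.C (MvPolynomial.X i) := by
  simp [phi]

lemma eval_phi (j : σ) (p : MvPolynomial σ K) :
    (phi K σ j p).eval (MvPolynomial.X j) = p := by
  induction p using MvPolynomial.induction_on with
  | C a => simp [phi, MvPolynomial.algebraMap_eq, Polynomial.algebraMap_apply]
  | add p q hp hq => simp [hp, hq]
  | mul_X p i hp =>
    rw [map_mul, phi_X, Polynomial.eval_mul, hp]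
    split_ifs with h <;> simp [h]

variable (N : Type) [AddCommGroup N] [Module (MvPolynomial σ K) N]

/-- The module `N[t]` with `X_j` acting as `t`. -/
def Tw (j : σ) : Type := (fun _ => PolynomialModule (MvPolynomial σ K) N) j

instance (j : σ) : AddCommGroup (Tw K σ N j) :=
  inferInstanceAs (AddCommGroup (PolynomialModule (MvPolynomial σ K) N))

instance twPoly (j : σ) : Module (Polynomial (MvPolynomial σ K)) (Tw K σ N j) :=
  inferInstanceAs (Module _ (PolynomialModule (MvPolynomial σ K) N))

instance (j : σ) : Module (MvPolynomial σ K) (Tw K σ N j) :=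
  Module.compHom _ (phi K σ j)

lemma tw_smul (j : σ) (p : MvPolynomial σ K) (q : Tw K σ N j) : p • q = phi K σ j p • q := rfl

/-- Multiplication by the old `X_j`. -/
def old (j : σ) : Tw K σ N j →ₗ[MvPolynomial σ K] Tw K σ N j where
  toFun q := (Polynomial.C (MvPolynomial.X j) : Polynomial (MvPolynomial σ K)) • q
  map_add' := smul_add _
  map_smul' p q := by
    simp only [tw_smul, RingHom.id_apply]
    exact smul_comm _ _ _

/-- Evaluation at `t = X_j`. -/
def ev (j : σ) : Tw K σ N j →ₗ[MvPolynomial σ K] N where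
  toFun q := PolynomialModule.eval (MvPolynomial.X j) (q : PolynomialModule (MvPolynomial σ K) N)
  map_add' := map_add _
  map_smul' p q := by
    rw [tw_smul]
    refine (PolynomialModule.eval_smul _ _ _).trans ?_
    rw [eval_phi]; rfl

lemma ev_surj (j : σ) : Function.Surjective (ev K σ N j) := fun n =>
  ⟨PolynomialModule.single _ 0 n, by
    refine (PolynomialModule.eval_single _ _ _).trans ?_
    simp⟩

lemma C_smul_coeff {R L : Type} [CommRing R] [AddCommGroup L] [Module R L] (r : R)
    (q : PolynomialModule R L) (k : ℕ) : (Polynomial.C r • q).coeff k = r • q.coeff k := by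
  have := PolynomialModule.monomial_smul_apply 0 r q k
  simpa using this

lemma X_smul_coeff {R L : Type} [CommRing R] [AddCommGroup L] [Module R L]
    (q : PolynomialModule R L) (k : ℕ) :
    ((Polynomial.X : Polynomial R) • q).coeff (k+1) = q.coeff k := by
  have := PolynomialModule.monomial_smul_apply 1 (1 : R) q (k+1)
  rw [← Polynomial.X] at this
  simpa using this

lemma old_pow (j : σ) (e : ℕ) (h : ∀ n : N, (MvPolynomial.X j : MvPolynomial σ K) ^ e • n = 0) :
    old K σ N j ^ e = 0 := by
  have h1 : ∀ e q, (old K σ N j ^ e) q =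
      (Polynomial.C (MvPolynomial.X j ^ e) : Polynomial (MvPolynomial σ K)) • q := by
    intro e q
    induction e with
    | zero => simp
    | succ e ih =>
      rw [pow_succ', Module.End.mul_apply, ih]
      change (Polynomial.C (MvPolynomial.X j) : Polynomial (MvPolynomial σ K)) •
        ((Polynomial.C (MvPolynomial.X j ^ e) : Polynomial (MvPolynomial σ K)) • q) = _
      rw [smul_smul, ← Polynomial.C_mul, pow_succ']
  ext q
  rw [h1]
  apply PolynomialModule.coeff_injective
  ext k
  refine (C_smul_coeff _ _ _).trans ?_
  exact h _

lemma tw_nilp (j i : σ) (hij : i ≠ j) (e : ℕ)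
    (h : ∀ n : N, (MvPolynomial.X i : MvPolynomial σ K) ^ e • n = 0) (q : Tw K σ N j) :
    (MvPolynomial.X i : MvPolynomial σ K) ^ e • q = 0 := by
  rw [tw_smul, map_pow, phi_X, if_neg hij, ← Polynomial.C_pow]
  apply PolynomialModule.coeff_injective
  ext k
  refine (C_smul_coeff _ _ _).trans ?_
  exact h _

lemma d_apply (j : σ) (q : Tw K σ N j) :
    ((MvPolynomial.X j : MvPolynomial σ K) • LinearMap.id - old K σ N j :
      Tw K σ N j →ₗ[MvPolynomial σ K] Tw K σ N j) q =
    (Polynomial.X - Polynomial.C (MvPolynomial.X j) : Polynomial (MvPolynomial σ K)) • q := by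
  rw [sub_smul, LinearMap.sub_apply, LinearMap.smul_apply, tw_smul, phi_X, if_pos rfl]
  rfl

lemma poly_inj {R L : Type} [CommRing R] [AddCommGroup L] [Module R L] (r : R) (e : ℕ)
    (h : ∀ n : L, r ^ e • n = 0) (q : PolynomialModule R L)
    (hq : (Polynomial.X : Polynomial R) • q = Polynomial.C r • q) : q = 0 := by
  have h1 : ∀ k, q.coeff k = r • q.coeff (k+1) := by
    intro k
    rw [← C_smul_coeff, ← hq, X_smul_coeff]
  have h2 : ∀ e k, q.coeff k = r ^ e • q.coeff (k+e) := by
    intro e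
    induction e with
    | zero => simp
    | succ e ih =>
      intro k
      rw [ih k, h1 (k+e), smul_smul, pow_succ]; rfl
  apply PolynomialModule.coeff_injective
  ext k
  rw [h2 e k, h]; rfl

lemma d_inj (j : σ) (e : ℕ) (h : ∀ n : N, (MvPolynomial.X j : MvPolynomial σ K) ^ e • n = 0) :
    Function.Injective
      ((MvPolynomial.X j : MvPolynomial σ K) • LinearMap.id - old K σ N j :
      Tw K σ N j →ₗ[MvPolynomial σ K] Tw K σ N j) := by
  rw [injective_iff_map_eq_zero]
  intro q hq
  rw [d_apply, sub_smul, sub_eq_zero] at hq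
  exact poly_inj _ e h q hq

lemma d_exact (j : σ) : Function.Exact
      ((MvPolynomial.X j : MvPolynomial σ K) • LinearMap.id - old K σ N j :
      Tw K σ N j →ₗ[MvPolynomial σ K] Tw K σ N j) (ev K σ N j) := by
  have key : ∀ q : PolynomialModule (MvPolynomial σ K) N, ∃ p : PolynomialModule (MvPolynomial σ K) N,
      q = (Polynomial.X - Polynomial.C (MvPolynomial.X j) : Polynomial (MvPolynomial σ K)) • p +
        PolynomialModule.single _ 0 (PolynomialModule.eval (MvPolynomial.X j) q) := by
    intro q
    induction q using PolynomialModule.induction_linear with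
    | zero => exact ⟨0, by simp⟩
    | add x y hx hy =>
      obtain ⟨p, hp⟩ := hx
      obtain ⟨p', hp'⟩ := hy
      refine ⟨p + p', ?_⟩
      rw [map_add, PolynomialModule.single_add, smul_add]
      nth_rewrite 1 [hp, hp']
      abel
    | single k m =>
      induction k generalizing m with
      | zero => exact ⟨0, by simp [PolynomialModule.eval_single]⟩
      | succ k ih =>
        obtain ⟨p, hp⟩ := ih ((MvPolynomial.X j : MvPolynomial σ K) • m)
        refine ⟨PolynomialModule.single _ k m + p, ?_⟩
        rw [PolynomialModule.eval_single] at hp ⊢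
        rw [smul_add, add_assoc, pow_succ, ← smul_smul, ← hp, sub_smul]
        have h1 := PolynomialModule.monomial_smul_single 0 (MvPolynomial.X j : MvPolynomial σ K) k m
        have h2 := PolynomialModule.monomial_smul_single 1 (1 : MvPolynomial σ K) k m
        rw [← Polynomial.X, one_smul, add_comm] at h2
        rw [zero_add] at h1
        rw [h2, ← h1]
        simp
  intro q
  constructor
  · intro hq
    obtain ⟨p, hp⟩ := key q
    refine ⟨p, (d_apply K σ N j p).trans ?_⟩
    have hq' : PolynomialModule.eval (MvPolynomial.X j)
      (q : PolynomialModule (MvPolynomial σ K) N) = 0 := hq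
    rw [hq', PolynomialModule.single_zero, add_zero] at hp
    exact hp.symm
  · rintro ⟨p, rfl⟩
    rw [d_apply]
    refine (PolynomialModule.eval_smul _ _ _).trans ?_
    simp

lemma main (M : ModuleCat.{0} (MvPolynomial σ K)) (P : ProjectiveResolution M)
    (c : ℕ) (hM : ∀ (i : σ) (m : M), (MvPolynomial.X i : MvPolynomial σ K) ^ c • m = 0)
    (e : ℕ) (T : Finset σ) : ∀ (N : Type) [AddCommGroup N] [Module (MvPolynomial σ K) N],
    (∀ i ∈ T, ∀ n : N, (MvPolynomial.X i : MvPolynomial σ K) ^ e • n = 0) →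
    Nontrivial (N ⊗[MvPolynomial σ K] M) → ∀ i ≤ T.card,
    Nontrivial ((G P.complex i).obj (ModuleCat.of (MvPolynomial σ K) N)) := by
  induction T using Finset.induction_on with
  | empty =>
    intro N _ _ _ hN i hi
    obtain rfl : i = 0 := by simpa using hi
    exact G_zero M (ModuleCat.of _ N) P hN
  | insert j T hj ih =>
    intro N _ _ hN hNM i hi
    have hQM : Nontrivial (Tw K σ N j ⊗[MvPolynomial σ K] M) :=
      (LinearMap.rTensor_surjective M (ev_surj K σ N j)).nontrivial
    have hQ := ih (Tw K σ N j) (fun i hi n => tw_nilp K σ N j i (fun h => hj (h ▸ hi)) e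
      (hN i (Finset.mem_insert_of_mem hi)) n) hQM
    have hNj := hN j (Finset.mem_insert_self _ _)
    have st := fun i hi => step P (MvPolynomial.X j) c (hM j) (ModuleCat.of _ (Tw K σ N j))
      (ModuleCat.of _ N) (old K σ N j) e (old_pow K σ N j e hNj) (ev K σ N j) (ev_surj K σ N j)
      (d_inj K σ N j e hNj) (d_exact K σ N j) i (hQ i hi)
    rw [Finset.card_insert_of_notMem hj] at hi
    rcases Nat.lt_or_ge T.card i with h | h
    · obtain rfl : i = T.card + 1 := by omega
      exact (st _ le_rfl).2
    · exact (st i h).1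

end poly

lemma exists_functional (m : Ideal S) [m.IsMaximal] (N : Type) [AddCommGroup N] [Module S N]
    [Nontrivial N] (c : ℕ) (hc : m ^ c ≤ Module.annihilator S N) :
    ∃ (f : N →ₗ[S] S ⧸ m) (n : N), f n ≠ 0 := by
  let := Ideal.Quotient.field m
  have hne : m • (⊤ : Submodule S N) ≠ ⊤ := by
    intro h
    have : ∀ k, m ^ k • (⊤ : Submodule S N) = ⊤ := by
      intro k
      induction k with
      | zero => simp
      | succ k ih => rw [pow_succ, Submodule.mul_smul, h, ih]
    have h2 := this c
    have h3 : m ^ c • (⊤ : Submodule S N) = ⊥ := by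
      rw [eq_bot_iff, Submodule.smul_le]
      intro r hr n _
      exact Module.mem_annihilator.1 (hc hr) n
    rw [h3] at h2
    exact bot_ne_top h2
  have : Nontrivial (N ⧸ m • (⊤ : Submodule S N)) := Submodule.Quotient.nontrivial_iff.2 hne
  obtain ⟨v, hv⟩ := exists_ne (0 : N ⧸ m • (⊤ : Submodule S N))
  obtain ⟨f, hf⟩ := Module.Projective.exists_dual_ne_zero (S ⧸ m) hv
  obtain ⟨n, rfl⟩ := Submodule.mkQ_surjective _ v
  exact ⟨(f.restrictScalars S).comp (Submodule.mkQ _), n, hf⟩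

lemma tensor_nontrivial (m : Ideal S) [m.IsMaximal] (N M : Type) [AddCommGroup N] [Module S N]
    [AddCommGroup M] [Module S M] [Nontrivial N] [Nontrivial M]
    (c : ℕ) (hc : m ^ c ≤ Module.annihilator S N)
    (e : ℕ) (he : m ^ e ≤ Module.annihilator S M) : Nontrivial (N ⊗[S] M) := by
  let := Ideal.Quotient.field m
  obtain ⟨f, n, hf⟩ := exists_functional m N c hc
  obtain ⟨g, k, hg⟩ := exists_functional m M e he
  refine ⟨n ⊗ₜ k, 0, fun h => ?_⟩
  have := congrArg ((LinearMap.mul' S (S ⧸ m)).comp (TensorProduct.map f g)) h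
  simp [hf, hg] at this

lemma irrel_maximal (K : Type) [Field K] (n : ℕ) : (irrel K n).IsMaximal := by
  have h : irrel K n = RingHom.ker (MvPolynomial.constantCoeff (σ := Fin (n+1)) (R := K)) := by
    ext p
    have := MvPolynomial.mem_pow_idealOfVars_iff' (σ := Fin (n+1)) (R := K) 1 p
    rw [pow_one] at this
    refine this.trans ?_
    rw [RingHom.mem_ker, MvPolynomial.constantCoeff_eq]
    constructor
    · intro h
      exact h 0 (by simp)
    · intro h x hx
      have : x = 0 := by
        rw [Nat.lt_one_iff] at hx
        exact (Finsupp.degree_eq_zero_iff x).1 hx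
      rw [this, h]
  rw [h]
  exact RingHom.ker_isMaximal_of_surjective _ fun a => ⟨MvPolynomial.C a, by simp⟩

end TorNV

/-- Lichtenbaum.  Let `S = K[X₀,…,Xₙ]` and let `N, M` be nonzero
finitely generated graded `S`-modules of finite length.  Then `Tor_i^S(N,M) ≠ 0`
for all `0 ≤ i ≤ n+1`. -/
theorem tor_nonvanishing_of_finiteLength
    (K : Type) [Field K] (n : ℕ)
    (N M : Type) [AddCommGroup N] [Module (PolyS K n) N]
    [AddCommGroup M] [Module (PolyS K n) M]
    (hN : Nontrivial N) (hM : Nontrivial M)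
    (hNfl : IsGradedFiniteLength K n N) (hMfl : IsGradedFiniteLength K n M) :
    ∀ i : ℕ, i ≤ n + 1 →
      Nontrivial (((Tor (ModuleCat (PolyS K n)) i).obj
        (ModuleCat.of (PolyS K n) N)).obj (ModuleCat.of (PolyS K n) M)) := by
  intro i hi
  obtain ⟨_, c, hc⟩ := hNfl
  obtain ⟨_, e, he⟩ := hMfl
  have := TorNV.irrel_maximal K n
  have hmem : ∀ i, (MvPolynomial.X i : PolyS K n) ∈ irrel K n :=
    fun i => Ideal.subset_span ⟨i, rfl⟩
  have hT := TorNV.tensor_nontrivial (irrel K n) N M c hc e he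
  rw [TorNV.tor_nontrivial_iff _ _ (ProjectiveResolution.of _)]
  exact TorNV.main K (Fin (n+1)) (ModuleCat.of (PolyS K n) M) _ e
    (fun i m => Module.mem_annihilator.1 (he (Ideal.pow_mem_pow (hmem i) e)) m) c Finset.univ N
    (fun i _ m => Module.mem_annihilator.1 (hc (Ideal.pow_mem_pow (hmem i) c)) m) hT i
    (by simpa using hi)
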